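/- Let X be a real-valued random variable with unbounded distribution F and Y a nonnegative random variable with distribution G, neither degenerate at zero, and let H be the distribution of XY. Suppose (X,Y) satisfies Assumption 1 (there is a measurable function h:[0,∞)→(0,∞) such that P(X>x | Y=y) ~ h(y)P(X>x) as x→∞ uniformly in y≥0) and Assumption 2 (Ḡ(bx)=o(H̄(x)) as x→∞ for every constant b>0). If F belongs to the class L(γ) for some γ≥0, then H belongs to L(γ/β_G), where β_G=sup{y:G(y)<1}∈(0,∞] is the right endpoint of G and γ/β_G is understood as 0 when β_G=∞. -/

import Mathlib

open MeasureTheory ProbabilityTheory Filter Set Asymptotics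

noncomputable section

/-- The tail (survival) function `x ↦ P(Z > x)` of a random variable `Z`. -/
def rvTail {Ω : Type*} [MeasureSpace Ω] (Z : Ω → ℝ) (x : ℝ) : ℝ :=
  (ℙ {ω | x < Z ω}).toReal

/-- The cumulative distribution function `x ↦ P(Z ≤ x)` of a random variable `Z`. -/
def rvCdf {Ω : Type*} [MeasureSpace Ω] (Z : Ω → ℝ) (x : ℝ) : ℝ :=
  (ℙ {ω | Z ω ≤ x}).toReal

/-- The left limit of the cdf, `G(y-) = P(Z < y)`. -/
def rvCdfLeft {Ω : Type*} [MeasureSpace Ω] (Z : Ω → ℝ) (y : ℝ) : ℝ :=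
  (ℙ {ω | Z ω < y}).toReal

/-- The distribution of `Z` is unbounded (above): its tail is positive for every `x > 0`. -/
def UnboundedDist {Ω : Type*} [MeasureSpace Ω] (Z : Ω → ℝ) : Prop :=
  ∀ x > 0, 0 < rvTail Z x

/-- The support `D_Z = {y : P(Z ∈ (y - δ, y + δ)) > 0 for all δ > 0}` of the
distribution of `Z`. -/
def distSupport {Ω : Type*} [MeasureSpace Ω] (Z : Ω → ℝ) : Set ℝ :=
  {y | ∀ δ > 0, 0 < ℙ {ω | Z ω ∈ Ioo (y - δ) (y + δ)}}

/-- The distribution of `Z` belongs to the class `L(γ)`: it is unbounded above and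
`P(Z > x - t) ~ e^{γ t} P(Z > x)` as `x → ∞`, for every `t > 0`. -/
def MemLGamma {Ω : Type*} [MeasureSpace Ω] (Z : Ω → ℝ) (γ : ℝ) : Prop :=
  UnboundedDist Z ∧
    ∀ t > 0, (fun x => rvTail Z (x - t)) ~[atTop] (fun x => Real.exp (γ * t) * rvTail Z x)

/-- The tail of the two-fold convolution of the distribution of `Z` with itself. -/
def convSqTail {Ω : Type*} [MeasureSpace Ω] (Z : Ω → ℝ) (x : ℝ) : ℝ :=
  (((Measure.map Z ℙ).conv (Measure.map Z ℙ)) (Ioi x)).toReal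

/-- The distribution of `Z` belongs to the class `S(γ)`: it belongs to `L(γ)`, the
exponential moment `c = ∫ e^{γ y} dV(y)` is finite, and the tail of the two-fold
convolution satisfies `V̄*²(x) ~ 2 c V̄(x)` as `x → ∞`. -/
def MemSGamma {Ω : Type*} [MeasureSpace Ω] (Z : Ω → ℝ) (γ : ℝ) : Prop :=
  MemLGamma Z γ ∧
    Integrable (fun y => Real.exp (γ * y)) (Measure.map Z ℙ) ∧
    (fun x => convSqTail Z x) ~[atTop]
      (fun x => 2 * (∫ y, Real.exp (γ * y) ∂(Measure.map Z ℙ)) * rvTail Z x)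

open Classical in
/-- `γ / β_G`, where `β_G = sup {y : G(y) < 1}` is the right endpoint of the distribution
of `Z`, with the convention that `γ / β_G = 0` when `β_G = ∞`.
(Note that `G(y) < 1 ↔ P(Z > y) > 0`.) -/
def gammaOverBeta {Ω : Type*} [MeasureSpace Ω] (Z : Ω → ℝ) (γ : ℝ) : ℝ :=
  if BddAbove {y : ℝ | 0 < rvTail Z y} then γ / sSup {y : ℝ | 0 < rvTail Z y} else 0

/-- Assumption 2: `Ḡ(b x) = o(H̄(x))` as `x → ∞` for every constant `b > 0`, where `G` is
the distribution of `Y` and `H` is the distribution of the product `X Y`. -/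
def Assumption2 {Ω : Type*} [MeasureSpace Ω] (X Y : Ω → ℝ) : Prop :=
  ∀ b > 0, (fun x => rvTail Y (b * x)) =o[atTop] fun x => rvTail (fun ω => X ω * Y ω) x

/-- Assumption 1: `K x y` is the conditional probability `P(X > x | Y = y)`, namely for
`y` in the support of `Y` it is the limit of `P(X > x | Y ∈ (y - δ, y + δ])` as `δ → 0+`,
and for `y` outside the support it is the unconditional probability `P(X > x)` (and then
`h y = 1`); `h : [0,∞) → (0,∞)` is a measurable function such that
`P(X > x | Y = y) ~ h(y) P(X > x)` as `x → ∞`, uniformly for `y ≥ 0`. -/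
def Assumption1 {Ω : Type*} [MeasureSpace Ω] (X Y : Ω → ℝ) (h : ℝ → ℝ) (K : ℝ → ℝ → ℝ) :
    Prop :=
  Measurable h ∧ (∀ y, 0 ≤ y → 0 < h y) ∧
    (∀ y, y ∉ distSupport Y → h y = 1 ∧ ∀ x, K x y = rvTail X x) ∧
    (∀ y ∈ distSupport Y, ∀ x : ℝ,
      Tendsto
        (fun δ : ℝ => (ℙ {ω | x < X ω ∧ Y ω ∈ Ioc (y - δ) (y + δ)}).toReal /
          (ℙ {ω | Y ω ∈ Ioc (y - δ) (y + δ)}).toReal)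
        (nhdsWithin 0 (Ioi 0)) (nhds (K x y))) ∧
    ∀ ε > 0, ∀ᶠ x in atTop, ∀ y, 0 ≤ y → |K x y / (h y * rvTail X x) - 1| < ε

/-- `(X, Y)` follows a Farlie–Gumbel–Morgenstern (FGM) distribution with parameter
`θ ∈ [-1, 1]`: `P(X > x, Y > y) = F̄(x) Ḡ(y) (1 + θ F(x) G(y))` for all `x` in the
support of `X` and `y` in the support of `Y`. -/
def FGM {Ω : Type*} [MeasureSpace Ω] (X Y : Ω → ℝ) (θ : ℝ) : Prop :=
  θ ∈ Icc (-1 : ℝ) 1 ∧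
    ∀ x ∈ distSupport X, ∀ y ∈ distSupport Y,
      (ℙ {ω | x < X ω ∧ y < Y ω}).toReal =
        rvTail X x * rvTail Y y * (1 + θ * rvCdf X x * rvCdf Y y)

/-- `(X, Y)` follows a bivariate Sarmanov distribution with kernels `φ₁, φ₂` and
parameter `θ`: the joint law has density `1 + θ φ₁(x) φ₂(y)` with respect to the product
of the marginal laws, where `φ₁, φ₂` are measurable, `E φ₁(X) = E φ₂(Y) = 0` and
`1 + θ φ₁(x) φ₂(y) ≥ 0`. -/
def Sarmanov {Ω : Type*} [MeasureSpace Ω] (X Y : Ω → ℝ) (φ₁ φ₂ : ℝ → ℝ) (θ : ℝ) : Prop :=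
  Measurable φ₁ ∧ Measurable φ₂ ∧
    Integrable (fun ω => φ₁ (X ω)) ℙ ∧ Integrable (fun ω => φ₂ (Y ω)) ℙ ∧
    (∫ ω, φ₁ (X ω)) = 0 ∧ (∫ ω, φ₂ (Y ω)) = 0 ∧
    (∀ x y : ℝ, 0 ≤ y → 0 ≤ 1 + θ * φ₁ x * φ₂ y) ∧
    Measure.map (fun ω => (X ω, Y ω)) ℙ =
      ((Measure.map X ℙ).prod (Measure.map Y ℙ)).withDensity
        (fun p => ENNReal.ofReal (1 + θ * φ₁ p.1 * φ₂ p.2))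

/-- The condition `ψ(y) = lim_{δ → 0+} (∫_{y-δ}^{y+δ} φ₂(v) G(dv)) / (G(y+δ) - G(y-δ))`
for all `y` in the support of `Y`. -/
def SarmanovPsi {Ω : Type*} [MeasureSpace Ω] (Y : Ω → ℝ) (φ₂ ψ : ℝ → ℝ) : Prop :=
  ∀ y ∈ distSupport Y,
    Tendsto
      (fun δ : ℝ => (∫ v in Ioc (y - δ) (y + δ), φ₂ v ∂(Measure.map Y ℙ)) /
        (rvCdf Y (y + δ) - rvCdf Y (y - δ)))
      (nhdsWithin 0 (Ioi 0)) (nhds (ψ y))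

/-!
Write `F̄` and `H̄` for the tails of `X` and `X Y`, and split `H̄(x - t) = P(X Y > x - t)`
according to the size of `Y`. The part `Y > x / x₀` is negligible by Assumption 2. On
`a < Y ≤ x / x₀` both `(x - t) / Y` and `x / Y` are large, so by Assumption 1 and `F ∈ L(γ)` the
shift by `t / Y` in the conditional tail of `X` costs a factor of about
`exp (γ t / Y) ≤ exp (γ t / a)`, uniformly in `Y`. The part `Y ≤ a` is negligible too: for `γ > 0`
because `F̄((x - t) / a) = o(F̄(x / b))` for `a < b < β_G`, while `F̄(x / b) = O(H̄(x))`; for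
`γ = 0` because `a` may be taken close to `0`, where `Y` has little mass. Letting `a ↑ β_G` gives
the upper bound. In the lower bound the factor is at least `exp (γ t / β_G)` since `Y ≤ β_G` almost
surely, and when `β_G = ∞` monotonicity of `H̄` suffices.

Assumption 1 concerns limits over shrinking intervals; Besicovitch differentiation of measures
identifies them, for almost every `y`, with a regular conditional distribution, through which
probabilities of events in `X` and `Y` are integrals over the law of `Y`.
-/

section RealMeasures

open scoped Topology

theorem frequently_nhdsWithin_mem_of_dense {α : Type*} [TopologicalSpace α] {D s : Set α}
    (hD : Dense D) (hs : IsOpen s) (a : α) [(𝓝[s] a).NeBot] : ∃ᶠ x in 𝓝[s] a, x ∈ D := by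
  refine frequently_iff.2 fun {U} hU => ?_
  obtain ⟨V, hV, haV, hVU⟩ := mem_nhdsWithin.1 hU
  have hne : (V ∩ s).Nonempty :=
    Filter.nonempty_of_mem
      (inter_mem (mem_nhdsWithin_of_mem_nhds (hV.mem_nhds haV)) self_mem_nhdsWithin)
  obtain ⟨x, hxD, hx⟩ := hD.exists_mem_open (hV.inter hs) hne
  exact ⟨x, hVU hx, hxD⟩

theorem frequently_nhdsGT_measure_singleton_sub_eq_zero (μ : Measure ℝ) [SFinite μ] (y : ℝ) :
    ∃ᶠ δ in 𝓝[>] (0 : ℝ), μ {y - δ} = 0 := by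
  have hatoms : {a : ℝ | 0 < μ {a}}.Countable :=
    Measure.countable_meas_pos_of_disjoint_iUnion measurableSet_singleton
      fun a b hab => disjoint_singleton.2 hab
  have hdense := (hatoms.preimage (sub_right_injective (b := y))).dense_compl ℝ
  exact (frequently_nhdsWithin_mem_of_dense hdense isOpen_Ioi 0).mono fun δ hδ => by
    simpa using hδ

theorem ae_forall_tendsto_Ioc_eq_rnDeriv (ρ μ : Measure ℝ) [IsLocallyFiniteMeasure ρ]
    [IsLocallyFiniteMeasure μ] :
    ∀ᵐ y ∂μ, ∀ L : ℝ,
      Tendsto (fun δ => ρ.real (Ioc (y - δ) (y + δ)) / μ.real (Ioc (y - δ) (y + δ)))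
        (𝓝[>] 0) (𝓝 L) → L = (ρ.rnDeriv μ y).toReal := by
  filter_upwards [Besicovitch.ae_tendsto_rnDeriv ρ μ, ρ.rnDeriv_lt_top μ] with y hball hfin L hL
  refine tendsto_nhds_unique_of_frequently_eq hL
    ((ENNReal.tendsto_toReal hfin.ne).comp hball) ?_
  refine (frequently_nhdsGT_measure_singleton_sub_eq_zero (ρ + μ) y).mono fun δ hatom => ?_
  -- `Ioc` and `closedBall` differ by the left endpoint, an atom for countably many `δ` only.
  have hball_eq : ∀ m : Measure ℝ, m {y - δ} = 0 →
      m (Ioc (y - δ) (y + δ)) = m (Metric.closedBall y δ) := fun m hm => by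
    rw [Real.closedBall_eq_Icc]
    exact measure_congr (Ioc_ae_eq_Icc' hm)
  obtain ⟨hρ, hμ⟩ := add_eq_zero.1 hatom
  simp only [Function.comp_apply, measureReal_def, ENNReal.toReal_div, hball_eq ρ hρ,
    hball_eq μ hμ]

theorem tendsto_measure_Ioc_nhdsGT (μ : Measure ℝ) [IsFiniteMeasure μ] (a : ℝ) :
    Tendsto (fun b => μ (Ioc a b)) (𝓝[>] a) (𝓝 0) := by
  have hempty : ⋂ b > a, Ioc a b = ∅ := by
    refine eq_empty_of_forall_notMem fun x hx => ?_
    have hxa : a < x := (mem_iInter₂.1 hx (a + 1) (lt_add_one a)).1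
    obtain ⟨b, hab, hbx⟩ := exists_between hxa
    exact hbx.not_ge (mem_iInter₂.1 hx b hab).2
  have := tendsto_measure_biInter_gt (μ := μ) (s := Ioc a) (a := a)
    (fun b _ => nullMeasurableSet_Ioc) (fun b c _ hbc => Ioc_subset_Ioc_right hbc)
    ⟨a + 1, lt_add_one a, measure_ne_top _ _⟩
  rwa [hempty, measure_empty] at this

theorem tendsto_measureReal_Ioi_nhdsGT (μ : Measure ℝ) [IsFiniteMeasure μ] (a : ℝ) :
    Tendsto (fun b => μ.real (Ioi b)) (𝓝[>] a) (𝓝 (μ.real (Ioi a))) := by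
  have hIoc : Tendsto (fun b => μ.real (Ioc a b)) (𝓝[>] a) (𝓝 0) :=
    (ENNReal.tendsto_toReal_zero_iff fun _ => measure_ne_top _ _).2 (tendsto_measure_Ioc_nhdsGT μ a)
  have hsub := hIoc.const_sub (μ.real (Ioi a))
  rw [sub_zero] at hsub
  refine hsub.congr' ?_
  filter_upwards [self_mem_nhdsWithin] with b hb
  rw [← Ioi_sdiff_Ioi, measureReal_sdiff (Ioi_subset_Ioi (le_of_lt hb)) measurableSet_Ioi]
  ring

end RealMeasures

section Tails

open scoped Topology

variable {Ω : Type*} [MeasureSpace Ω] {Z : Ω → ℝ}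

theorem rvTail_nonneg (Z : Ω → ℝ) (x : ℝ) : 0 ≤ rvTail Z x :=
  ENNReal.toReal_nonneg

theorem rvTail_eq_measureReal_map (hZ : Measurable Z) (x : ℝ) :
    rvTail Z x = (Measure.map Z ℙ).real (Ioi x) :=
  (map_measureReal_apply hZ measurableSet_Ioi).symm

theorem MemLGamma.eventually_abs_sub_le {γ τ ε : ℝ} (hZ : MemLGamma Z γ) (hτ : 0 < τ)
    (hε : 0 < ε) :
    ∀ᶠ z in atTop, |rvTail Z (z - τ) - Real.exp (γ * τ) * rvTail Z z| ≤ ε * rvTail Z z := by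
  filter_upwards [(hZ.2 τ hτ).isLittleO.of_const_mul_right.def hε] with z hz
  simpa only [Pi.sub_apply, Real.norm_eq_abs, abs_of_nonneg (rvTail_nonneg Z z)] using hz

variable [IsFiniteMeasure (ℙ : Measure Ω)]

theorem rvTail_antitone (Z : Ω → ℝ) : Antitone (rvTail Z) := fun _ _ hab =>
  measureReal_mono (μ := ℙ) fun _ hω => hab.trans_lt hω

theorem UnboundedDist.rvTail_pos (hZ : UnboundedDist Z) (x : ℝ) : 0 < rvTail Z x :=
  (hZ (max x 1) (by positivity)).trans_le (rvTail_antitone Z (le_max_left x 1))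

theorem tendsto_rvTail_nhdsGT (hZ : Measurable Z) (x : ℝ) :
    Tendsto (rvTail Z) (𝓝[>] x) (𝓝 (rvTail Z x)) := by
  simpa only [← rvTail_eq_measureReal_map hZ] using
    tendsto_measureReal_Ioi_nhdsGT (Measure.map Z ℙ) x

theorem exists_gt_rvTail_pos (hZ : Measurable Z) {x : ℝ} (hx : 0 < rvTail Z x) :
    ∃ a > x, 0 < rvTail Z a :=
  (((tendsto_rvTail_nhdsGT hZ x).eventually_const_lt hx).and self_mem_nhdsWithin).exists.imp
    fun _ ha => ⟨ha.2, ha.1⟩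

theorem rvTail_zero_pos (hZ₀ : 0 ≤ᵐ[ℙ] Z) (hZ : ¬ Z =ᵐ[ℙ] 0) : 0 < rvTail Z 0 := by
  refine (rvTail_nonneg Z 0).lt_of_ne' fun h => hZ ?_
  have hpos : ∀ᵐ ω, ¬ 0 < Z ω := measure_eq_zero_iff_ae_notMem.1 ((measureReal_eq_zero_iff).1 h)
  filter_upwards [hZ₀, hpos] with ω h₀ hle
  exact le_antisymm (not_lt.1 hle) h₀

theorem ae_le_csSup_of_rvTail (hZ : Measurable Z) (hbdd : BddAbove {z | 0 < rvTail Z z}) :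
    ∀ᵐ ω, Z ω ≤ sSup {z | 0 < rvTail Z z} := by
  have hzero : rvTail Z (sSup {z | 0 < rvTail Z z}) = 0 := by
    refine (rvTail_nonneg Z _).antisymm' (not_lt.1 fun hpos => ?_)
    obtain ⟨a, ha, hZa⟩ := exists_gt_rvTail_pos hZ hpos
    exact ha.not_ge (le_csSup hbdd hZa)
  filter_upwards [measure_eq_zero_iff_ae_notMem.1 ((measureReal_eq_zero_iff).1 hzero)] with ω hω
  exact not_lt.1 hω

theorem MemLGamma.isLittleO_rvTail {ι : Type*} {l : Filter ι} {f g : ι → ℝ} {γ : ℝ}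
    (hZ : MemLGamma Z γ) (hγ : 0 < γ) (hf : Tendsto f l atTop)
    (hfg : Tendsto (fun i => g i - f i) l atTop) :
    (fun i => rvTail Z (g i)) =o[l] fun i => rvTail Z (f i) := by
  refine IsLittleO.of_bound fun c hc => ?_
  obtain ⟨n, hn, hcn⟩ : ∃ n > 0, 1 / c + 1 ≤ Real.exp (γ * n) :=
    ((eventually_gt_atTop 0).and ((Real.tendsto_exp_atTop.comp
      (tendsto_id.const_mul_atTop hγ)).eventually_ge_atTop (1 / c + 1))).exists
  have hshift := (tendsto_atTop_add_const_right _ n hf).eventually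
    (hZ.eventually_abs_sub_le hn one_pos)
  filter_upwards [hshift, hfg.eventually_ge_atTop n] with i hi hgf
  rw [add_sub_cancel_right] at hi
  rw [Real.norm_of_nonneg (rvTail_nonneg Z _), Real.norm_of_nonneg (rvTail_nonneg Z _)]
  have hfn := rvTail_nonneg Z (f i + n)
  calc rvTail Z (g i) ≤ rvTail Z (f i + n) := rvTail_antitone Z (by linarith)
    _ = c * (1 / c * rvTail Z (f i + n)) := by field_simp
    _ ≤ c * rvTail Z (f i) := by
      gcongr
      nlinarith [(abs_le.1 hi).1]

end Tails

section ConditionalTail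

open scoped Topology

variable {Ω : Type*} [MeasureSpace Ω] {X Y : Ω → ℝ}

/-- The part of the tail of `X` above the random level `f (Y)` that comes from `{Y ∈ B}`, that is
`P(X > f (Y), Y ∈ B)`. For `f y = x / y` and `B ⊆ (0, ∞)` it is `P(X Y > x, Y ∈ B)`. -/
def tailOn (X Y : Ω → ℝ) (f : ℝ → ℝ) (B : Set ℝ) : ℝ :=
  (ℙ : Measure Ω).real {ω | f (Y ω) < X ω ∧ Y ω ∈ B}

theorem tailOn_nonneg (X Y : Ω → ℝ) (f : ℝ → ℝ) (B : Set ℝ) : 0 ≤ tailOn X Y f B :=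
  measureReal_nonneg

theorem rvTail_mul_eq_tailOn (hY₀ : 0 ≤ᵐ[ℙ] Y) {x : ℝ} (hx : 0 ≤ x) :
    rvTail (fun ω => X ω * Y ω) x = tailOn X Y (x / ·) (Ioi 0) := by
  refine measureReal_congr ?_
  filter_upwards [hY₀] with ω hω
  refine propext ⟨fun (h : x < X ω * Y ω) => ?_, fun h => (div_lt_iff₀ h.2).1 h.1⟩
  have hpos : 0 < Y ω := lt_of_le_of_ne hω fun h₀ => hx.not_gt (by simpa [← h₀] using h)
  exact ⟨(div_lt_iff₀ hpos).2 h, hpos⟩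

variable [IsFiniteMeasure (ℙ : Measure Ω)]

/-- The conditional tail `P(X > x | Y = y)`, read off the regular conditional distribution of `X`
given `Y`; it is determined for almost every `y` only. -/
def condTail (X Y : Ω → ℝ) (x y : ℝ) : ℝ :=
  (condDistrib X Y ℙ y).real (Ioi x)

theorem condTail_nonneg (X Y : Ω → ℝ) (x y : ℝ) : 0 ≤ condTail X Y x y :=
  measureReal_nonneg

theorem condTail_le_one (X Y : Ω → ℝ) (x y : ℝ) : condTail X Y x y ≤ 1 :=
  measureReal_le_one

theorem condTail_antitone (X Y : Ω → ℝ) (y : ℝ) : Antitone fun x => condTail X Y x y :=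
  fun _ _ hab => measureReal_mono (Ioi_subset_Ioi hab)

theorem measurable_condTail_comp (X Y : Ω → ℝ) {f : ℝ → ℝ} (hf : Measurable f) :
    Measurable fun y => condTail X Y (f y) y :=
  (Kernel.measurable_kernel_prodMk_left (κ := condDistrib X Y ℙ)
    (measurableSet_lt (hf.comp measurable_fst) measurable_snd)).ennreal_toReal

theorem integrable_condTail_comp (X Y : Ω → ℝ) {f : ℝ → ℝ} (hf : Measurable f) :
    Integrable (fun y => condTail X Y (f y) y) (Measure.map Y ℙ) :=
  .of_bound (measurable_condTail_comp X Y hf).aestronglyMeasurable 1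
    (.of_forall fun y => by
      rw [Real.norm_of_nonneg (condTail_nonneg ..)]
      exact condTail_le_one X Y (f y) y)

theorem tailOn_eq_setIntegral (hX : Measurable X) (hY : Measurable Y) {f : ℝ → ℝ}
    (hf : Measurable f) {B : Set ℝ} (hB : MeasurableSet B) :
    tailOn X Y f B = ∫ y in B, condTail X Y (f y) y ∂Measure.map Y ℙ := by
  have hS : MeasurableSet {p : ℝ × ℝ | f p.1 < p.2 ∧ p.1 ∈ B} :=
    (measurableSet_lt (hf.comp measurable_fst) measurable_snd).inter (measurable_fst hB)
  have hsection : ∀ y, condDistrib X Y ℙ y (Prod.mk y ⁻¹' {p : ℝ × ℝ | f p.1 < p.2 ∧ p.1 ∈ B}) =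
      B.indicator (fun y => condDistrib X Y ℙ y (Ioi (f y))) y := fun y => by
    by_cases hy : y ∈ B <;> simp [hy, Ioi]
  have hjoint : ℙ {ω | f (Y ω) < X ω ∧ Y ω ∈ B} =
      ∫⁻ y in B, condDistrib X Y ℙ y (Ioi (f y)) ∂Measure.map Y ℙ := by
    rw [← lintegral_indicator hB, ← lintegral_congr hsection, ← Measure.compProd_apply hS,
      compProd_map_condDistrib hX.aemeasurable, Measure.map_apply (hY.prodMk hX) hS]
    rfl
  rw [tailOn, measureReal_def, hjoint]
  refine (integral_toReal ?_ (.of_forall fun y => measure_lt_top _ _)).symm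
  exact (Kernel.measurable_kernel_prodMk_left (κ := condDistrib X Y ℙ)
    (measurableSet_lt (hf.comp measurable_fst) measurable_snd)).aemeasurable

theorem mul_tailOn_le_mul_tailOn (hX : Measurable X) (hY : Measurable Y) {f g : ℝ → ℝ}
    (hf : Measurable f) (hg : Measurable g) {B : Set ℝ} (hB : MeasurableSet B) {c C : ℝ}
    (hfg : ∀ᵐ y ∂Measure.map Y ℙ,
      y ∈ B → c * condTail X Y (f y) y ≤ C * condTail X Y (g y) y) :
    c * tailOn X Y f B ≤ C * tailOn X Y g B := by
  rw [tailOn_eq_setIntegral hX hY hf hB, tailOn_eq_setIntegral hX hY hg hB, ← integral_const_mul,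
    ← integral_const_mul]
  exact setIntegral_mono_on_ae ((integrable_condTail_comp X Y hf).const_mul c).integrableOn
    ((integrable_condTail_comp X Y hg).const_mul C).integrableOn hB hfg

theorem tailOn_mono {f g : ℝ → ℝ} {B C : Set ℝ} (hBC : B ⊆ C) (hgf : ∀ y ∈ B, g y ≤ f y) :
    tailOn X Y f B ≤ tailOn X Y g C :=
  measureReal_mono (μ := ℙ) fun _ hω => ⟨(hgf _ hω.2).trans_lt hω.1, hBC hω.2⟩

theorem tailOn_union_le (f : ℝ → ℝ) (B C : Set ℝ) :
    tailOn X Y f (B ∪ C) ≤ tailOn X Y f B + tailOn X Y f C := by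
  refine (measureReal_mono (μ := ℙ) fun ω hω => ?_).trans (measureReal_union_le _ _)
  exact hω.2.imp (And.intro hω.1) (And.intro hω.1)

theorem tailOn_const_le_rvTail (x : ℝ) (B : Set ℝ) : tailOn X Y (fun _ => x) B ≤ rvTail X x :=
  measureReal_mono (μ := ℙ) fun _ hω => hω.1

theorem tailOn_le_measureReal_map (hY : Measurable Y) (f : ℝ → ℝ) {B : Set ℝ}
    (hB : MeasurableSet B) : tailOn X Y f B ≤ (Measure.map Y ℙ).real B := by
  rw [map_measureReal_apply hY hB]
  exact measureReal_mono (μ := ℙ) fun _ hω => hω.2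

theorem tailOn_div_le_rvTail_mul (x : ℝ) {B : Set ℝ} (hB : B ⊆ Ioi 0) :
    tailOn X Y (x / ·) B ≤ rvTail (fun ω => X ω * Y ω) x :=
  measureReal_mono (μ := ℙ) fun _ hω => (div_lt_iff₀ (hB hω.2)).1 hω.1

end ConditionalTail

theorem abs_sub_mul_le_of_relative_error {a b A B E δ ε : ℝ} (hE : 0 ≤ E) (hδ : 0 ≤ δ)
    (hδ_half : δ ≤ 1 / 2) (hδε : δ * (4 * E + 4) ≤ ε) (hb₀ : 0 ≤ b) (hA : |A - a| ≤ δ * a)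
    (hB : |B - b| ≤ δ * b) (hab : |a - E * b| ≤ δ * b) : |A - E * B| ≤ ε * B := by
  have ha : a ≤ (E + δ) * b := by linarith [(abs_le.1 hab).2]
  have hb : b ≤ 2 * B := by nlinarith [(abs_le.1 hB).1]
  have hEB : |E * b - E * B| ≤ E * (δ * b) := by
    rw [← mul_sub, abs_mul, abs_of_nonneg hE, abs_sub_comm]
    gcongr
  calc |A - E * B| ≤ |A - a| + |a - E * b| + |E * b - E * B| := by
        linarith [abs_sub_le A a (E * B), abs_sub_le a (E * b) (E * B)]
    _ ≤ δ * ((E + δ) * b) + δ * b + E * (δ * b) := by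
        gcongr
        exact hA.trans (by gcongr)
    _ = δ * (2 * E + 1 + δ) * b := by ring
    _ ≤ δ * (2 * E + 1 + 1) * (2 * B) := by gcongr; linarith
    _ = δ * (4 * E + 4) * B := by ring
    _ ≤ ε * B := by gcongr; linarith

section CondTailEquiv

open scoped Topology

variable {Ω : Type*} [MeasureSpace Ω] {X Y : Ω → ℝ} {h : ℝ → ℝ}

theorem ae_mem_distSupport (hY : Measurable Y) : ∀ᵐ y ∂Measure.map Y ℙ, y ∈ distSupport Y := by
  filter_upwards [Measure.support_mem_ae (μ := Measure.map Y ℙ)] with y hy δ hδ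
  have hnhds : Ioo (y - δ) (y + δ) ∈ 𝓝 y := Ioo_mem_nhds (by linarith) (by linarith)
  simpa only [Measure.map_apply hY measurableSet_Ioo, preimage] using
    (Measure.mem_support_iff_forall y).1 hy _ hnhds

variable [IsFiniteMeasure (ℙ : Measure Ω)]

/-- Almost sure form of Assumption 1: `P(X > x | Y = y) ~ h(y) P(X > x)` as `x → ∞`, uniformly over
almost every `y`. It is phrased without quotients and with the regular conditional distribution. -/
def CondTailEquiv (X Y : Ω → ℝ) (h : ℝ → ℝ) : Prop :=
  (∀ᵐ y ∂Measure.map Y ℙ, 0 < h y) ∧ ∀ ε > 0, ∀ᶠ x in atTop, ∀ᵐ y ∂Measure.map Y ℙ,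
    |condTail X Y x y - h y * rvTail X x| ≤ ε * (h y * rvTail X x)

theorem ae_forall_tendsto_eq_condTail (hX : Measurable X) (hY : Measurable Y) (x : ℝ) :
    ∀ᵐ y ∂Measure.map Y ℙ, ∀ L : ℝ,
      Tendsto (fun δ => (ℙ {ω | x < X ω ∧ Y ω ∈ Ioc (y - δ) (y + δ)}).toReal /
        (ℙ {ω | Y ω ∈ Ioc (y - δ) (y + δ)}).toReal) (𝓝[>] 0) (𝓝 L) → L = condTail X Y x y := by
  have hκ : Measurable fun y => condDistrib X Y ℙ y (Ioi x) :=
    Kernel.measurable_coe _ measurableSet_Ioi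
  set ρ := (Measure.map Y ℙ).withDensity fun y => condDistrib X Y ℙ y (Ioi x) with hρ
  have hρ_apply : ∀ B, MeasurableSet B → ρ B = ℙ {ω | x < X ω ∧ Y ω ∈ B} := fun B hB => by
    rw [hρ, withDensity_apply _ hB, setLIntegral_map hB hκ hY,
      setLIntegral_preimage_condDistrib hY hX.aemeasurable measurableSet_Ioi hB, inter_comm]
    rfl
  have : IsFiniteMeasure ρ := ⟨by rw [hρ_apply _ .univ]; exact measure_lt_top _ _⟩
  filter_upwards [ae_forall_tendsto_Ioc_eq_rnDeriv ρ (Measure.map Y ℙ),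
    Measure.rnDeriv_withDensity (Measure.map Y ℙ) hκ] with y hy hderiv L hL
  rw [hy L ?_, hderiv, condTail, measureReal_def]
  simpa only [measureReal_def, hρ_apply _ measurableSet_Ioc,
    Measure.map_apply hY measurableSet_Ioc, preimage] using hL

theorem Assumption1.condTailEquiv {K : ℝ → ℝ → ℝ} (hA : Assumption1 X Y h K) (hX : Measurable X)
    (hY : Measurable Y) (hY₀ : 0 ≤ᵐ[ℙ] Y) (hXunb : UnboundedDist X) : CondTailEquiv X Y h := by
  obtain ⟨-, hpos, -, hK, hunif⟩ := hA
  have hnonneg : ∀ᵐ y ∂Measure.map Y ℙ, 0 ≤ y :=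
    (ae_map_iff hY.aemeasurable measurableSet_Ici).2 hY₀
  refine ⟨hnonneg.mono hpos, fun ε hε => (hunif ε hε).mono fun x hx => ?_⟩
  filter_upwards [hnonneg, ae_mem_distSupport hY, ae_forall_tendsto_eq_condTail hX hY x]
    with y hy hsupp hlim
  have hden : 0 < h y * rvTail X x := mul_pos (hpos y hy) (hXunb.rvTail_pos x)
  have hrel := (hx y hy).le
  rwa [hlim _ (hK y hsupp x), div_sub_one hden.ne', abs_div, abs_of_pos hden,
    div_le_iff₀ hden] at hrel

theorem CondTailEquiv.eventually_ae_forall_ge (hXY : CondTailEquiv X Y h) (hX : Measurable X)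
    {ε : ℝ} (hε : 0 < ε) :
    ∀ᶠ x₀ in atTop, ∀ᵐ y ∂Measure.map Y ℙ, ∀ x ≥ x₀,
      |condTail X Y x y - h y * rvTail X x| ≤ ε * (h y * rvTail X x) := by
  obtain ⟨a, ha⟩ := eventually_atTop.1 (hXY.2 ε hε)
  filter_upwards [eventually_ge_atTop a] with x₀ hx₀
  have hrat : ∀ᵐ y ∂Measure.map Y ℙ, ∀ q : ℚ, a ≤ q →
      |condTail X Y q y - h y * rvTail X q| ≤ ε * (h y * rvTail X q) :=
    ae_all_iff.2 fun q => eventually_imp_distrib_left.2 (ha q)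
  filter_upwards [hrat] with y hy x hx
  have hcond : Tendsto (fun z => condTail X Y z y) (𝓝[>] x) (𝓝 (condTail X Y x y)) :=
    tendsto_measureReal_Ioi_nhdsGT (condDistrib X Y ℙ y) x
  have htail := (tendsto_rvTail_nhdsGT hX x).const_mul (h y)
  refine le_of_tendsto_of_tendsto_of_frequently (hcond.sub htail).abs (htail.const_mul ε) ?_
  refine ((frequently_nhdsWithin_mem_of_dense Rat.denseRange_cast isOpen_Ioi x).and_eventually
    self_mem_nhdsWithin).mono ?_
  rintro _ ⟨⟨q, rfl⟩, hq⟩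
  exact hy q (hx₀.trans (hx.trans (le_of_lt hq)))

theorem CondTailEquiv.eventually_ae_abs_sub_le (hXY : CondTailEquiv X Y h) (hX : Measurable X)
    {γ τ ε : ℝ} (hXγ : MemLGamma X γ) (hτ : 0 < τ) (hε : 0 < ε) :
    ∀ᶠ x₀ in atTop, ∀ᵐ y ∂Measure.map Y ℙ, ∀ x ≥ x₀,
      |condTail X Y (x - τ) y - Real.exp (γ * τ) * condTail X Y x y| ≤
        ε * condTail X Y x y := by
  set E := Real.exp (γ * τ)
  have hE : 0 < E := Real.exp_pos _
  set δ := min (1 / 2) (ε / (4 * E + 4))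
  have hδ : 0 < δ := by positivity
  have hδε : δ * (4 * E + 4) ≤ ε := (le_div_iff₀ (by positivity)).1 (min_le_right _ _)
  obtain ⟨a, ha⟩ := eventually_atTop.1 (hXγ.eventually_abs_sub_le hτ hδ)
  filter_upwards [hXY.eventually_ae_forall_ge hX hδ, (tendsto_atTop_add_const_right _ (-τ)
    tendsto_id).eventually (hXY.eventually_ae_forall_ge hX hδ), eventually_ge_atTop a]
    with x₀ hx₀ hx₀τ hax₀
  filter_upwards [hx₀, hx₀τ, hXY.1] with y hy hyτ hpos x hx
  refine abs_sub_mul_le_of_relative_error hE.le hδ.le (min_le_left _ _) hδε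
    (mul_nonneg hpos.le (rvTail_nonneg X x)) (hyτ (x - τ) (by simp only [id]; linarith))
    (hy x hx) ?_
  calc |h y * rvTail X (x - τ) - E * (h y * rvTail X x)|
      = h y * |rvTail X (x - τ) - E * rvTail X x| := by
        rw [← abs_of_pos hpos, ← abs_mul, abs_of_pos hpos]; ring_nf
    _ ≤ h y * (δ * rvTail X x) := by gcongr; exact ha x (hax₀.trans hx)
    _ = δ * (h y * rvTail X x) := by ring

theorem CondTailEquiv.eventually_ae_condTail_mul_rvTail_le (hXY : CondTailEquiv X Y h)
    (hX : Measurable X) :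
    ∀ᶠ x₀ in atTop, ∀ᵐ y ∂Measure.map Y ℙ, ∀ u ≥ x₀, ∀ v ≥ x₀,
      rvTail X v * condTail X Y u y ≤ 3 * rvTail X u * condTail X Y v y := by
  filter_upwards [hXY.eventually_ae_forall_ge hX one_half_pos] with x₀ hx₀
  filter_upwards [hx₀] with y hy u hu v hv
  have hu_le : condTail X Y u y ≤ 3 / 2 * (h y * rvTail X u) := by
    linarith [(abs_le.1 (hy u hu)).2]
  have hv_le : h y * rvTail X v ≤ 2 * condTail X Y v y := by linarith [(abs_le.1 (hy v hv)).1]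
  calc rvTail X v * condTail X Y u y ≤ rvTail X v * (3 / 2 * (h y * rvTail X u)) := by
        gcongr; exact rvTail_nonneg X v
    _ = 3 / 2 * rvTail X u * (h y * rvTail X v) := by ring
    _ ≤ 3 / 2 * rvTail X u * (2 * condTail X Y v y) := by
        have := rvTail_nonneg X u
        gcongr
    _ = 3 * rvTail X u * condTail X Y v y := by ring

theorem CondTailEquiv.eventually_rvTail_mul_tailOn_le (hXY : CondTailEquiv X Y h)
    (hX : Measurable X) (hY : Measurable Y) :
    ∀ᶠ x₀ in atTop, ∀ u ≥ x₀, ∀ v ≥ x₀, ∀ B, MeasurableSet B →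
      rvTail X v * tailOn X Y (fun _ => u) B ≤ 3 * rvTail X u * tailOn X Y (fun _ => v) B := by
  filter_upwards [hXY.eventually_ae_condTail_mul_rvTail_le hX] with x₀ hx₀ u hu v hv B hB
  refine mul_tailOn_le_mul_tailOn hX hY measurable_const measurable_const hB ?_
  filter_upwards [hx₀] with y hy _
  exact hy u hu v hv

theorem CondTailEquiv.eventually_tailOn_pos (hXY : CondTailEquiv X Y h) (hX : Measurable X)
    (hY : Measurable Y) (hXunb : UnboundedDist X) {B : Set ℝ} (hB : MeasurableSet B)
    (hYB : 0 < (Measure.map Y ℙ) B) :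
    ∀ᶠ x in atTop, 0 < tailOn X Y (fun _ => x) B := by
  filter_upwards [hXY.2 (1 / 2) one_half_pos] with x hx
  have hpos : ∀ᵐ y ∂Measure.map Y ℙ, 0 < condTail X Y x y := by
    filter_upwards [hx, hXY.1] with y hy hhy
    have := mul_pos hhy (hXunb.rvTail_pos x)
    linarith [(abs_le.1 hy).1]
  rw [tailOn_eq_setIntegral hX hY measurable_const hB, setIntegral_pos_iff_support_of_nonneg_ae
    (.of_forall fun y => condTail_nonneg X Y x y)
    (integrable_condTail_comp X Y measurable_const).integrableOn]
  refine hYB.trans_le (measure_mono_ae ?_)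
  filter_upwards [hpos] with y hy hyB
  exact ⟨hy.ne', hyB⟩

end CondTailEquiv

section ProductTail

open scoped Topology

variable {Ω : Type*} [MeasureSpace Ω] {X Y : Ω → ℝ} {h : ℝ → ℝ} {γ : ℝ}

theorem Assumption2.eventually_rvTail_div_le (hXY : Assumption2 X Y) {b ε : ℝ} (hb : 0 < b)
    (hε : 0 < ε) :
    ∀ᶠ x in atTop, rvTail Y (x / b) ≤ ε * rvTail (fun ω => X ω * Y ω) x := by
  filter_upwards [(hXY b⁻¹ (inv_pos.2 hb)).def hε] with x hx
  rwa [Real.norm_of_nonneg (rvTail_nonneg ..), Real.norm_of_nonneg (rvTail_nonneg ..),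
    inv_mul_eq_div] at hx

variable [IsFiniteMeasure (ℙ : Measure Ω)]

theorem exists_div_le_gammaOverBeta_add (hγ : 0 ≤ γ) (hY : Measurable Y) (hYpos : 0 < rvTail Y 0)
    {η : ℝ} (hη : 0 < η) :
    ∃ a > 0, 0 < rvTail Y a ∧ γ / a ≤ gammaOverBeta Y γ + η := by
  obtain ⟨b, hb, hYb⟩ := exists_gt_rvTail_pos hY hYpos
  suffices ∃ a, 0 < rvTail Y a ∧ 0 < gammaOverBeta Y γ + η ∧ γ / (gammaOverBeta Y γ + η) < a by
    obtain ⟨a, hYa, hs, hlt⟩ := this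
    have ha : 0 < a := (div_nonneg hγ hs.le).trans_lt hlt
    exact ⟨a, ha, hYa, (div_le_comm₀ hs ha).1 hlt.le⟩
  unfold gammaOverBeta
  split_ifs with hbdd
  · set β := sSup {y | 0 < rvTail Y y}
    have hβ : 0 < β := hb.trans_le (le_csSup hbdd hYb)
    have hlt : γ / (γ / β + η) < β := by
      rw [div_lt_iff₀ (by positivity), mul_add, mul_div_cancel₀ γ hβ.ne']
      exact lt_add_of_pos_right γ (by positivity)
    obtain ⟨a, hYa, ha⟩ := exists_lt_of_lt_csSup ⟨b, hYb⟩ hlt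
    exact ⟨a, hYa, by positivity, ha⟩
  · obtain ⟨a, hYa, ha⟩ := not_bddAbove_iff.1 hbdd (γ / (0 + η))
    exact ⟨a, hYa, by simpa using hη, ha⟩

theorem CondTailEquiv.isBigO_rvTail_div (hXY : CondTailEquiv X Y h) (hX : Measurable X)
    (hY : Measurable Y) (hXunb : UnboundedDist X) {a : ℝ} (ha : 0 < a) (hYa : 0 < rvTail Y a) :
    (fun x => rvTail X (x / a)) =O[atTop] rvTail fun ω => X ω * Y ω := by
  have hYa' : 0 < (Measure.map Y ℙ) (Ioi a) := by
    rw [rvTail_eq_measureReal_map hY] at hYa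
    exact (ENNReal.toReal_pos_iff.1 hYa).1
  obtain ⟨x₀, hcomp, hpos⟩ := ((hXY.eventually_rvTail_mul_tailOn_le hX hY).and
    (hXY.eventually_tailOn_pos hX hY hXunb measurableSet_Ioi hYa')).exists
  set p := tailOn X Y (fun _ => x₀) (Ioi a)
  refine IsBigO.of_bound (3 * rvTail X x₀ / p) ?_
  filter_upwards [(tendsto_id.atTop_div_const ha).eventually_ge_atTop x₀, eventually_ge_atTop 0]
    with x hx hx₀
  rw [Real.norm_of_nonneg (rvTail_nonneg ..), Real.norm_of_nonneg (rvTail_nonneg ..),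
    div_mul_eq_mul_div, le_div_iff₀ hpos]
  calc rvTail X (x / a) * p
      ≤ 3 * rvTail X x₀ * tailOn X Y (fun _ => x / a) (Ioi a) :=
        hcomp x₀ le_rfl (x / a) hx _ measurableSet_Ioi
    _ ≤ 3 * rvTail X x₀ * tailOn X Y (x / ·) (Ioi a) := by
        have := rvTail_nonneg X x₀
        gcongr
        exact tailOn_mono subset_rfl fun y hy => div_le_div_of_nonneg_left hx₀ ha (le_of_lt hy)
    _ ≤ 3 * rvTail X x₀ * rvTail (fun ω => X ω * Y ω) x := by
        have := rvTail_nonneg X x₀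
        gcongr
        exact tailOn_div_le_rvTail_mul x (Ioi_subset_Ioi ha.le)

theorem CondTailEquiv.unboundedDist_mul (hXY : CondTailEquiv X Y h) (hX : Measurable X)
    (hY : Measurable Y) (hXunb : UnboundedDist X) (hYpos : 0 < rvTail Y 0) :
    UnboundedDist fun ω => X ω * Y ω := by
  intro x _
  obtain ⟨a, ha, hYa⟩ := exists_gt_rvTail_pos hY hYpos
  obtain ⟨C, hC⟩ := (hXY.isBigO_rvTail_div hX hY hXunb ha hYa).bound
  obtain ⟨z, hz, hxz⟩ := (hC.and (eventually_ge_atTop x)).exists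
  have hne : rvTail (fun ω => X ω * Y ω) z ≠ 0 := fun h₀ => by
    rw [h₀, norm_zero, mul_zero] at hz
    exact (norm_pos_iff.2 (hXunb.rvTail_pos (z / a)).ne').not_ge hz
  exact ((rvTail_nonneg _ z).lt_of_ne' hne).trans_le (rvTail_antitone _ hxz)

theorem tailOn_div_Ioc_le_tailOn_const {x : ℝ} (hx : 0 ≤ x) (a : ℝ) :
    tailOn X Y (x / ·) (Ioc 0 a) ≤ tailOn X Y (fun _ => x / a) (Ioc 0 a) :=
  tailOn_mono subset_rfl fun _ hy => div_le_div_of_nonneg_left hx hy.1 hy.2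

theorem tendsto_sub_div_sub_div_atTop {a b : ℝ} (ha : 0 < a) (hab : a < b) (t : ℝ) :
    Tendsto (fun x => (x - t) / a - x / b) atTop atTop := by
  have hslope : 0 < a⁻¹ - b⁻¹ := sub_pos.2 (inv_strictAnti₀ ha hab)
  refine (tendsto_atTop_add_const_right _ (-(t / a)) (tendsto_id.const_mul_atTop hslope)).congr
    fun x => ?_
  simp only [id]
  ring

theorem CondTailEquiv.eventually_tailOn_const_Ioc_le (hXY : CondTailEquiv X Y h)
    (hX : Measurable X) (hY : Measurable Y) (hXunb : UnboundedDist X) {δ : ℝ} (hδ : 0 < δ) :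
    ∀ᶠ a in 𝓝[>] (0 : ℝ), ∀ᶠ u in atTop, tailOn X Y (fun _ => u) (Ioc 0 a) ≤ δ * rvTail X u := by
  obtain ⟨x₀, hx₀⟩ := (hXY.eventually_rvTail_mul_tailOn_le hX hY).exists
  have hpos := hXunb.rvTail_pos x₀
  have hsmall : ∀ᶠ a in 𝓝[>] (0 : ℝ),
      (Measure.map Y ℙ).real (Ioc 0 a) < δ * rvTail X x₀ / 3 :=
    ((ENNReal.tendsto_toReal_zero_iff fun _ => measure_ne_top _ _).2
      (tendsto_measure_Ioc_nhdsGT (Measure.map Y ℙ) 0)).eventually_lt_const (by positivity)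
  filter_upwards [hsmall] with a ha
  filter_upwards [eventually_ge_atTop x₀] with u hu
  have := rvTail_nonneg X u
  refine le_of_mul_le_mul_left ?_ hpos
  calc rvTail X x₀ * tailOn X Y (fun _ => u) (Ioc 0 a)
      ≤ 3 * rvTail X u * tailOn X Y (fun _ => x₀) (Ioc 0 a) :=
        hx₀ u hu x₀ le_rfl _ measurableSet_Ioc
    _ ≤ 3 * rvTail X u * (δ * rvTail X x₀ / 3) := by
        gcongr
        exact (tailOn_le_measureReal_map hY _ measurableSet_Ioc).trans ha.le
    _ = rvTail X x₀ * (δ * rvTail X u) := by ring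

theorem CondTailEquiv.eventually_tailOn_sub_div_Ioc_le (hXY : CondTailEquiv X Y h)
    (hX : Measurable X) (hY : Measurable Y) (hXunb : UnboundedDist X) (hYpos : 0 < rvTail Y 0)
    (t : ℝ) {η : ℝ} (hη : 0 < η) :
    ∀ᶠ a in 𝓝[>] (0 : ℝ), ∀ᶠ x in atTop,
      tailOn X Y ((x - t) / ·) (Ioc 0 a) ≤ η * rvTail (fun ω => X ω * Y ω) x := by
  obtain ⟨b, hb, hYb⟩ := exists_gt_rvTail_pos hY hYpos
  obtain ⟨C, hC, hbound⟩ := (hXY.isBigO_rvTail_div hX hY hXunb hb hYb).exists_pos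
  filter_upwards [hXY.eventually_tailOn_const_Ioc_le hX hY hXunb (div_pos hη hC),
    Ioo_mem_nhdsGT hb] with a hsmall ⟨ha, hab⟩
  have hshift : Tendsto (fun x => (x - t) / a) atTop atTop :=
    (tendsto_atTop_add_const_right _ (-t) tendsto_id).atTop_div_const ha
  filter_upwards [hshift.eventually hsmall, hbound.bound, eventually_ge_atTop t,
    (tendsto_sub_div_sub_div_atTop ha hab t).eventually_ge_atTop 0] with x hx hxb hxt hxab
  rw [Real.norm_of_nonneg (rvTail_nonneg ..), Real.norm_of_nonneg (rvTail_nonneg ..)] at hxb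
  calc tailOn X Y ((x - t) / ·) (Ioc 0 a)
      ≤ tailOn X Y (fun _ => (x - t) / a) (Ioc 0 a) :=
        tailOn_div_Ioc_le_tailOn_const (sub_nonneg.2 hxt) a
    _ ≤ η / C * rvTail X ((x - t) / a) := hx
    _ ≤ η / C * (C * rvTail (fun ω => X ω * Y ω) x) := by
        gcongr
        exact (rvTail_antitone X (sub_nonneg.1 hxab)).trans hxb
    _ = η * rvTail (fun ω => X ω * Y ω) x := by field_simp

theorem CondTailEquiv.isLittleO_tailOn_sub_div_Ioc (hXY : CondTailEquiv X Y h)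
    (hX : Measurable X) (hY : Measurable Y) (hγ : 0 < γ) (hXγ : MemLGamma X γ) (t : ℝ) {a : ℝ}
    (ha : 0 < a) (hYa : 0 < rvTail Y a) :
    (fun x => tailOn X Y ((x - t) / ·) (Ioc 0 a)) =o[atTop] rvTail fun ω => X ω * Y ω := by
  obtain ⟨b, hab, hYb⟩ := exists_gt_rvTail_pos hY hYa
  have hb : 0 < b := ha.trans hab
  have hX_littleO : (fun x => rvTail X ((x - t) / a)) =o[atTop] fun x => rvTail X (x / b) :=
    hXγ.isLittleO_rvTail hγ (tendsto_id.atTop_div_const hb) (tendsto_sub_div_sub_div_atTop ha hab t)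
  refine (IsBigO.of_bound' ?_).trans_isLittleO
    (hX_littleO.trans_isBigO (hXY.isBigO_rvTail_div hX hY hXγ.1 hb hYb))
  filter_upwards [eventually_ge_atTop t] with x hx
  rw [Real.norm_of_nonneg (tailOn_nonneg ..), Real.norm_of_nonneg (rvTail_nonneg ..)]
  exact (tailOn_div_Ioc_le_tailOn_const (sub_nonneg.2 hx) a).trans (tailOn_const_le_rvTail _ _)

theorem CondTailEquiv.exists_tailOn_sub_div_Ioc_le (hXY : CondTailEquiv X Y h)
    (hX : Measurable X) (hY : Measurable Y) (hYpos : 0 < rvTail Y 0) (hγ : 0 ≤ γ)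
    (hXγ : MemLGamma X γ) (t : ℝ) {η : ℝ} (hη : 0 < η) :
    ∃ a > 0, γ / a ≤ gammaOverBeta Y γ + η ∧ ∀ᶠ x in atTop,
      tailOn X Y ((x - t) / ·) (Ioc 0 a) ≤ η * rvTail (fun ω => X ω * Y ω) x := by
  obtain rfl | hγ_pos := hγ.eq_or_lt
  · obtain ⟨a, hsmall, ha⟩ := ((hXY.eventually_tailOn_sub_div_Ioc_le hX hY hXγ.1 hYpos t hη).and
      self_mem_nhdsWithin).exists
    exact ⟨a, ha, by simpa [gammaOverBeta] using hη.le, hsmall⟩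
  · obtain ⟨a, ha, hYa, hγa⟩ := exists_div_le_gammaOverBeta_add hγ hY hYpos hη
    refine ⟨a, ha, hγa, ?_⟩
    filter_upwards [(hXY.isLittleO_tailOn_sub_div_Ioc hX hY hγ_pos hXγ t ha hYa).def hη] with x hx
    rwa [Real.norm_of_nonneg (tailOn_nonneg ..), Real.norm_of_nonneg (rvTail_nonneg ..)] at hx

theorem CondTailEquiv.eventually_tailOn_sub_div_Ioc_le_exp (hXY : CondTailEquiv X Y h)
    (hX : Measurable X) (hY : Measurable Y) (hXγ : MemLGamma X γ) {t a ε : ℝ} (ht : 0 < t)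
    (ha : 0 < a) (hε : 0 < ε) :
    ∀ᶠ x₀ in atTop, ∀ x, tailOn X Y ((x - t) / ·) (Ioc a (x / x₀)) ≤
      (Real.exp (γ / a * t) + ε) * rvTail (fun ω => X ω * Y ω) x := by
  filter_upwards [hXY.eventually_ae_abs_sub_le hX hXγ (div_pos ht ha) hε, eventually_gt_atTop 0]
    with x₀ hx₀ hx₀_pos x
  have hE : Real.exp (γ * (t / a)) = Real.exp (γ / a * t) := by ring_nf
  have hcond : ∀ᵐ y ∂Measure.map Y ℙ, y ∈ Ioc a (x / x₀) → 1 * condTail X Y ((x - t) / y) y ≤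
      (Real.exp (γ / a * t) + ε) * condTail X Y (x / y) y := by
    filter_upwards [hx₀] with y hy ⟨hay, hyx⟩
    have hy_pos : 0 < y := ha.trans hay
    have hlevel : x / y - t / a ≤ (x - t) / y := by
      rw [sub_div]
      gcongr
    have hx₀y : x₀ ≤ x / y := (le_div_comm₀ hy_pos hx₀_pos).1 hyx
    linarith [condTail_antitone X Y y hlevel, (abs_le.1 (hE ▸ hy (x / y) hx₀y)).2]
  calc tailOn X Y ((x - t) / ·) (Ioc a (x / x₀))
      = 1 * tailOn X Y ((x - t) / ·) (Ioc a (x / x₀)) := (one_mul _).symm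
    _ ≤ (Real.exp (γ / a * t) + ε) * tailOn X Y (x / ·) (Ioc a (x / x₀)) :=
        mul_tailOn_le_mul_tailOn hX hY (by fun_prop) (by fun_prop) measurableSet_Ioc hcond
    _ ≤ (Real.exp (γ / a * t) + ε) * rvTail (fun ω => X ω * Y ω) x := by
        gcongr
        exact tailOn_div_le_rvTail_mul x fun y hy => ha.trans hy.1

theorem CondTailEquiv.eventually_exp_mul_tailOn_div_Ioc_le (hXY : CondTailEquiv X Y h)
    (hX : Measurable X) (hY : Measurable Y) (hXγ : MemLGamma X γ) {t β ε : ℝ} (ht : 0 < t)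
    (hβ : 0 < β) (hYβ : ∀ᵐ ω, Y ω ≤ β) (hε : 0 < ε) :
    ∀ᶠ x₀ in atTop, ∀ x, (Real.exp (γ / β * t) - ε) * tailOn X Y (x / ·) (Ioc 0 (x / x₀)) ≤
      rvTail (fun ω => X ω * Y ω) (x - t) := by
  filter_upwards [hXY.eventually_ae_abs_sub_le hX hXγ (div_pos ht hβ) hε, eventually_gt_atTop 0]
    with x₀ hx₀ hx₀_pos x
  have hE : Real.exp (γ * (t / β)) = Real.exp (γ / β * t) := by ring_nf
  have hcond : ∀ᵐ y ∂Measure.map Y ℙ, y ∈ Ioc 0 (x / x₀) →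
      (Real.exp (γ / β * t) - ε) * condTail X Y (x / y) y ≤ 1 * condTail X Y ((x - t) / y) y := by
    filter_upwards [hx₀, (ae_map_iff hY.aemeasurable measurableSet_Iic).2 hYβ]
      with y hy hyβ ⟨hy_pos, hyx⟩
    have hlevel : (x - t) / y ≤ x / y - t / β := by
      rw [sub_div]
      gcongr
    have hx₀y : x₀ ≤ x / y := (le_div_comm₀ hy_pos hx₀_pos).1 hyx
    linarith [condTail_antitone X Y y hlevel, (abs_le.1 (hE ▸ hy (x / y) hx₀y)).1]
  calc (Real.exp (γ / β * t) - ε) * tailOn X Y (x / ·) (Ioc 0 (x / x₀))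
      ≤ 1 * tailOn X Y ((x - t) / ·) (Ioc 0 (x / x₀)) :=
        mul_tailOn_le_mul_tailOn hX hY (by fun_prop) (by fun_prop) measurableSet_Ioc hcond
    _ ≤ rvTail (fun ω => X ω * Y ω) (x - t) :=
        (one_mul _).trans_le (tailOn_div_le_rvTail_mul _ fun y hy => hy.1)

theorem rvTail_mul_le_tailOn_Ioc_add (hY : Measurable Y) (hY₀ : 0 ≤ᵐ[ℙ] Y) {x : ℝ} (hx : 0 ≤ x)
    (b : ℝ) :
    rvTail (fun ω => X ω * Y ω) x ≤ tailOn X Y (x / ·) (Ioc 0 b) + rvTail Y b := by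
  rw [rvTail_mul_eq_tailOn hY₀ hx, rvTail_eq_measureReal_map hY]
  calc tailOn X Y (x / ·) (Ioi 0) ≤ tailOn X Y (x / ·) (Ioc 0 b ∪ Ioi b) :=
        tailOn_mono Ioi_subset_Ioc_union_Ioi fun _ _ => le_rfl
    _ ≤ tailOn X Y (x / ·) (Ioc 0 b) + tailOn X Y (x / ·) (Ioi b) := tailOn_union_le _ _ _
    _ ≤ _ := by
        gcongr
        exact tailOn_le_measureReal_map hY _ measurableSet_Ioi

theorem CondTailEquiv.eventually_rvTail_mul_sub_le (hXY : CondTailEquiv X Y h)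
    (hXY₂ : Assumption2 X Y) (hX : Measurable X) (hY : Measurable Y) (hY₀ : 0 ≤ᵐ[ℙ] Y)
    (hYpos : 0 < rvTail Y 0) (hγ : 0 ≤ γ) (hXγ : MemLGamma X γ) {t ε : ℝ} (ht : 0 < t)
    (hε : 0 < ε) :
    ∀ᶠ x in atTop, rvTail (fun ω => X ω * Y ω) (x - t) ≤
      (Real.exp (gammaOverBeta Y γ * t) + ε) * rvTail (fun ω => X ω * Y ω) x := by
  set s := gammaOverBeta Y γ
  obtain ⟨η, hηε, hη⟩ : ∃ η, Real.exp ((s + η) * t) + 3 * η < Real.exp (s * t) + ε ∧ 0 < η := by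
    have hcont : Continuous fun η => Real.exp ((s + η) * t) + 3 * η := by fun_prop
    refine (((hcont.tendsto 0).mono_left nhdsWithin_le_nhds).eventually_lt_const ?_
      |>.and (self_mem_nhdsWithin (s := Ioi 0))).exists
    simpa using hε
  obtain ⟨a, ha, hγa, hsmall⟩ := hXY.exists_tailOn_sub_div_Ioc_le hX hY hYpos hγ hXγ t hη
  obtain ⟨x₀, hmid, hx₀⟩ := ((hXY.eventually_tailOn_sub_div_Ioc_le_exp hX hY hXγ ht ha hη).and
    (eventually_gt_atTop 0)).exists
  filter_upwards [hsmall, hXY₂.eventually_rvTail_div_le hx₀ hη, eventually_ge_atTop t]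
    with x hsmall_x hlarge_x hxt
  have hH := rvTail_nonneg (fun ω => X ω * Y ω) x
  have hexp : Real.exp (γ / a * t) ≤ Real.exp ((s + η) * t) := by gcongr
  calc rvTail (fun ω => X ω * Y ω) (x - t)
      ≤ tailOn X Y ((x - t) / ·) (Ioc 0 (x / x₀)) + rvTail Y (x / x₀) :=
        rvTail_mul_le_tailOn_Ioc_add hY hY₀ (sub_nonneg.2 hxt) _
    _ ≤ tailOn X Y ((x - t) / ·) (Ioc 0 a) + tailOn X Y ((x - t) / ·) (Ioc a (x / x₀)) +
          rvTail Y (x / x₀) := by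
        gcongr
        exact (tailOn_mono Ioc_subset_Ioc_union_Ioc fun _ _ => le_rfl).trans
          (tailOn_union_le _ _ _)
    _ ≤ η * rvTail (fun ω => X ω * Y ω) x +
          (Real.exp (γ / a * t) + η) * rvTail (fun ω => X ω * Y ω) x +
          η * rvTail (fun ω => X ω * Y ω) x := by
        gcongr
        exact hmid x
    _ = (Real.exp (γ / a * t) + 3 * η) * rvTail (fun ω => X ω * Y ω) x := by ring
    _ ≤ (Real.exp (s * t) + ε) * rvTail (fun ω => X ω * Y ω) x := by
        gcongr ?_ * _
        linarith

theorem CondTailEquiv.eventually_exp_mul_rvTail_mul_le (hXY : CondTailEquiv X Y h)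
    (hXY₂ : Assumption2 X Y) (hX : Measurable X) (hY : Measurable Y) (hY₀ : 0 ≤ᵐ[ℙ] Y)
    (hXγ : MemLGamma X γ) {t β ε : ℝ} (ht : 0 < t) (hβ : 0 < β) (hYβ : ∀ᵐ ω, Y ω ≤ β)
    (hε : 0 < ε) :
    ∀ᶠ x in atTop, (Real.exp (γ / β * t) - ε) * rvTail (fun ω => X ω * Y ω) x ≤
      rvTail (fun ω => X ω * Y ω) (x - t) := by
  set E := Real.exp (γ / β * t)
  have hE : 0 < E := Real.exp_pos _
  obtain ⟨x₀, hmain, hx₀⟩ := ((hXY.eventually_exp_mul_tailOn_div_Ioc_le hX hY hXγ ht hβ hYβ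
    (half_pos hε)).and (eventually_gt_atTop 0)).exists
  filter_upwards [hXY₂.eventually_rvTail_div_le hx₀ (div_pos (half_pos hε) hE),
    eventually_ge_atTop 0] with x hlarge hx
  set H := rvTail (fun ω => X ω * Y ω) x
  set P := tailOn X Y (x / ·) (Ioc 0 (x / x₀))
  have hPH : P ≤ H := tailOn_div_le_rvTail_mul x fun y hy => hy.1
  have hHP : H - P ≤ ε / 2 / E * H :=
    (sub_le_iff_le_add'.2 (rvTail_mul_le_tailOn_Ioc_add hY hY₀ hx _)).trans hlarge
  calc (E - ε) * H = (E - ε / 2) * P + (E - ε / 2) * (H - P) - ε / 2 * H := by ring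
    _ ≤ rvTail (fun ω => X ω * Y ω) (x - t) + E * (ε / 2 / E * H) - ε / 2 * H := by
        gcongr
        · exact hmain x
        · exact sub_le_self E (half_pos hε).le
    _ = rvTail (fun ω => X ω * Y ω) (x - t) := by field_simp; ring

theorem CondTailEquiv.eventually_exp_gammaOverBeta_mul_rvTail_mul_le (hXY : CondTailEquiv X Y h)
    (hXY₂ : Assumption2 X Y) (hX : Measurable X) (hY : Measurable Y) (hY₀ : 0 ≤ᵐ[ℙ] Y)
    (hYpos : 0 < rvTail Y 0) (hXγ : MemLGamma X γ) {t ε : ℝ} (ht : 0 < t) (hε : 0 < ε) :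
    ∀ᶠ x in atTop, (Real.exp (gammaOverBeta Y γ * t) - ε) * rvTail (fun ω => X ω * Y ω) x ≤
      rvTail (fun ω => X ω * Y ω) (x - t) := by
  unfold gammaOverBeta
  split_ifs with hbdd
  · obtain ⟨b, hb, hYb⟩ := exists_gt_rvTail_pos hY hYpos
    exact hXY.eventually_exp_mul_rvTail_mul_le hXY₂ hX hY hY₀ hXγ ht
      (hb.trans_le (le_csSup hbdd hYb)) (ae_le_csSup_of_rvTail hY hbdd) hε
  · refine .of_forall fun x => le_trans ?_ (rvTail_antitone _ (sub_le_self x ht.le))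
    rw [zero_mul, Real.exp_zero]
    exact mul_le_of_le_one_left (rvTail_nonneg _ x) (sub_le_self 1 hε.le)

end ProductTail

theorem product_memL_of_assumption1_general {Ω : Type*} [MeasureSpace Ω]
    [IsFiniteMeasure (ℙ : Measure Ω)] {X Y : Ω → ℝ} {h : ℝ → ℝ} {γ : ℝ} (hX : Measurable X)
    (hY : Measurable Y) (hY₀ : 0 ≤ᵐ[ℙ] Y) (hYnd : ¬ Y =ᵐ[ℙ] 0) (hXY : CondTailEquiv X Y h)
    (hXY₂ : Assumption2 X Y) (hγ : 0 ≤ γ) (hXγ : MemLGamma X γ) :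
    MemLGamma (fun ω => X ω * Y ω) (gammaOverBeta Y γ) := by
  have hYpos := rvTail_zero_pos hY₀ hYnd
  refine ⟨hXY.unboundedDist_mul hX hY hXγ.1 hYpos, fun t ht => ?_⟩
  refine (IsLittleO.of_bound fun ε hε => ?_).const_mul_right (Real.exp_pos _).ne'
  filter_upwards [hXY.eventually_rvTail_mul_sub_le hXY₂ hX hY hY₀ hYpos hγ hXγ ht hε,
    hXY.eventually_exp_gammaOverBeta_mul_rvTail_mul_le hXY₂ hX hY hY₀ hYpos hXγ ht hε]
    with x hupper hlower
  rw [Real.norm_eq_abs, Real.norm_of_nonneg (rvTail_nonneg _ x), Pi.sub_apply, abs_le]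
  constructor <;> linarith

theorem product_memL_of_assumption1 {Ω : Type*} [MeasureSpace Ω] [IsProbabilityMeasure (ℙ : Measure Ω)]
    (X Y : Ω → ℝ) (hXm : Measurable X) (hYm : Measurable Y)
    (hYnonneg : ∀ ω, 0 ≤ Y ω)
    (hFunb : UnboundedDist X)
    (hXnd : ℙ {ω | X ω = 0} ≠ 1) (hYnd : ℙ {ω | Y ω = 0} ≠ 1)
    (h : ℝ → ℝ) (K : ℝ → ℝ → ℝ) (hA1 : Assumption1 X Y h K) (hA2 : Assumption2 X Y)
    (γ : ℝ) (hγ : 0 ≤ γ) (hFL : MemLGamma X γ) :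
    MemLGamma (fun ω => X ω * Y ω) (gammaOverBeta Y γ) := by
  have hY₀ : 0 ≤ᵐ[ℙ] Y := .of_forall hYnonneg
  exact product_memL_of_assumption1_general hXm hYm hY₀
    (mt (mem_ae_iff_prob_eq_one (measurableSet_eq_fun hYm measurable_const)).1 hYnd)
    (hA1.condTailEquiv hXm hYm hY₀ hFunb) hA2 hγ hFL
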